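/- arXiv:2307.05066 — 3 statements merged into one kernel-verified Lean document; each statement's English description precedes it below -/
import Mathlib

section
/- For every model M, state s, agent i, and formula φ of the language ELKh_n, if M,s ⊨ Kh_i Kh_i φ then M,s ⊨ Kh_i φ (i.e. the formula Kh_i Kh_i φ → Kh_i φ is valid). -/
/-!
Formalization of the logic of strategically knowing how (ELKh_n) and of the
tableau procedure for it.
-/

namespace ELKh

/-- Formulas of the language ELKh_n:
`φ ::= ⊥ | p | ¬φ | (φ ∧ φ) | K_i φ | Kh_i φ`. -/
inductive Formula (P I : Type) : Type
  | bot : Formula P I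
  | atom : P → Formula P I
  | neg : Formula P I → Formula P I
  | and : Formula P I → Formula P I → Formula P I
  | know : I → Formula P I → Formula P I
  | kh : I → Formula P I → Formula P I

variable {P I : Type}

/-- Models of ELKh_n: states with equivalence relations `∼ᵢ`, actions for each
agent, a transition relation for each action, and a valuation. -/
structure Model (P I : Type) where
  W : Type
  sim : I → W → W → Prop
  equiv : ∀ i, Equivalence (sim i)
  Act : I → Type
  R : (i : I) → Act i → W → W → Prop
  V : W → P → Prop

/-- Transition between `i`-equivalence classes (classes are represented by
member states): `[s]ⁱ →ₐ [t]ⁱ` iff some `s' ∈ [s]ⁱ`, `t' ∈ [t]ⁱ` have `R a s' t'`. -/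
def Model.ctrans (M : Model P I) (i : I) (a : M.Act i) (s t : M.W) : Prop :=
  ∃ s' t', M.sim i s s' ∧ M.sim i t t' ∧ M.R i a s' t'

/-- Uniformly executable strategies for agent `i`: partial functions from
`∼ᵢ`-equivalence classes to actions of `i` (hence constant on classes), whose
chosen action is executable at every member of the class. -/
structure Strategy (M : Model P I) (i : I) where
  act : M.W → Option (M.Act i)
  congr : ∀ s t, M.sim i s t → act s = act t
  exec : ∀ s a, act s = some a → ∀ t, M.sim i s t → ∃ u, M.R i a t u

namespace Strategy

variable {M : Model P I} {i : I}

/-- The `k`-th step of the sequence of classes `[δ 0][δ 1]⋯` is a σ-step. -/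
def Steps (σ : Strategy M i) (δ : ℕ → M.W) (k : ℕ) : Prop :=
  ∃ a, σ.act (δ k) = some a ∧ M.ctrans i a (δ k) (δ (k+1))

/-- `[δ 0]⋯[δ h]` is a (finite) possible execution of σ. -/
def FinExec (σ : Strategy M i) (δ : ℕ → M.W) (h : ℕ) : Prop :=
  ∀ k < h, σ.Steps δ k

/-- `[δ 0]⋯[δ h]` is a complete finite execution of σ (its end class is not in
the domain of σ). -/
def CompleteFinExec (σ : Strategy M i) (δ : ℕ → M.W) (h : ℕ) : Prop :=
  σ.FinExec δ h ∧ σ.act (δ h) = none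

/-- `[δ 0][δ 1]⋯` is an infinite possible execution of σ (such an execution is
automatically complete). -/
def InfExec (σ : Strategy M i) (δ : ℕ → M.W) : Prop :=
  ∀ k, σ.Steps δ k

end Strategy

/-- Satisfaction for ELKh_n.  `Kh_i φ` holds at `s` iff there is a strategy σ
for `i` such that all complete executions of σ starting from `[s]ⁱ` are finite
(equivalently: there is no infinite execution of σ from `[s]ⁱ`) and every state
of every end class of a complete (finite) execution from `[s]ⁱ` satisfies `φ`. -/
def Sat (M : Model P I) : M.W → Formula P I → Prop
  | _, .bot => False
  | s, .atom p => M.V s p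
  | s, .neg φ => ¬ Sat M s φ
  | s, .and φ ψ => Sat M s φ ∧ Sat M s ψ
  | s, .know i φ => ∀ t, M.sim i s t → Sat M t φ
  | s, .kh i φ => ∃ σ : Strategy M i,
      (∀ δ : ℕ → M.W, M.sim i s (δ 0) → ¬ σ.InfExec δ) ∧
      (∀ (δ : ℕ → M.W) (h : ℕ), M.sim i s (δ 0) → σ.CompleteFinExec δ h →
        ∀ t, M.sim i (δ h) t → Sat M t φ)

/-! ### Subformulas -/

/-- The set of subformulas of a formula. -/
def subf : Formula P I → Set (Formula P I)
  | .bot => {Formula.bot}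
  | .atom p => {Formula.atom p}
  | .neg φ => insert (Formula.neg φ) (subf φ)
  | .and φ ψ => insert (Formula.and φ ψ) (subf φ ∪ subf ψ)
  | .know i φ => insert (Formula.know i φ) (subf φ)
  | .kh i φ => insert (Formula.kh i φ) (subf φ)

/-- `sub⁺(φ₀) = {ψ, ¬ψ : ψ subformula of φ₀} ∪ {Kᵢψ, ¬Kᵢψ : Khᵢψ subformula of φ₀}`. -/
def subPlus (φ0 : Formula P I) : Set (Formula P I) :=
  {χ | ∃ ψ ∈ subf φ0, χ = ψ ∨ χ = Formula.neg ψ} ∪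
  {χ | ∃ i ψ, Formula.kh i ψ ∈ subf φ0 ∧
      (χ = Formula.know i ψ ∨ χ = Formula.neg (Formula.know i ψ))}

/-- `∼ψ`:  `∼¬χ = χ`, and `∼ψ = ¬ψ` otherwise. -/
def simNeg : Formula P I → Formula P I
  | .neg χ => χ
  | ψ => Formula.neg ψ

/-! ### Labeled trees -/

/-- Labels of tableau edges: `ε`, an agent `i`, or an action `a_{Khᵢψ}`. -/
inductive ELabel (P I : Type) : Type
  | eps : ELabel P I
  | ag : I → ELabel P I
  | act : I → Formula P I → ELabel P I

/-- Labeled rooted trees: each node is labeled with a set of formulas, each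
non-root node carries the label of the edge connecting it to its parent, and
`blockedBy n = some n'` records that the node `n` is blocked by `n'`. -/
structure LTree (P I : Type) where
  Node : Type
  root : Node
  parent : Node → Option Node
  depth : Node → ℕ
  label : Node → Set (Formula P I)
  elabel : Node → ELabel P I
  blockedBy : Node → Option Node
  parent_root : parent root = none
  eq_root : ∀ n, parent n = none → n = root
  depth_root : depth root = 0
  depth_parent : ∀ n m, parent n = some m → depth n = depth m + 1

variable (T : LTree P I)

/-- The children of a node. -/
def Children (n : T.Node) : Set T.Node := {m | T.parent m = some n}

/-- A node is a leaf iff it has no children. -/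
def IsLeaf (n : T.Node) : Prop := ∀ m, T.parent m ≠ some n

/-- `Ancestor T m n`: `m` is a proper ancestor of `n`. -/
def Ancestor (m n : T.Node) : Prop :=
  Relation.TransGen (fun a b => T.parent b = some a) m n

/-- `IAnc T i m n`: `m` is an `i`-ancestor of `n`, i.e. a proper ancestor of
`n` connected to `n` by a path all of whose edges are labeled `i` or `ε`. -/
inductive IAnc (i : I) : T.Node → T.Node → Prop
  | single {m n} : T.parent n = some m →
      (T.elabel n = ELabel.eps ∨ T.elabel n = ELabel.ag i) → IAnc i m n
  | cons {m k n} : T.parent n = some k →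
      (T.elabel n = ELabel.eps ∨ T.elabel n = ELabel.ag i) →
      IAnc i m k → IAnc i m n

/-! ### The tableau construction -/

/-- A set of formulas is blatantly inconsistent iff it contains `⊥` or some
pair `ψ, ¬ψ`. -/
def Blatant (Γ : Set (Formula P I)) : Prop :=
  Formula.bot ∈ Γ ∨ ∃ ψ, ψ ∈ Γ ∧ Formula.neg ψ ∈ Γ

/-- `AutoChecked Γ φ` holds iff none of the expansion rules (a)-(g) is
applicable to `φ` in the label `Γ`; such formulas are (and remain) marked
``checked'' by step (h) of the construction. -/
def AutoChecked (Γ : Set (Formula P I)) : Formula P I → Prop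
  | .neg (.neg ψ) => ψ ∈ Γ
  | .and ψ χ => ψ ∈ Γ ∧ χ ∈ Γ
  | .neg (.and ψ χ) =>
      (Formula.neg ψ ∈ Γ ∧ Formula.neg χ ∈ Γ) ∨
      (Formula.neg ψ ∈ Γ ∧ χ ∈ Γ) ∨ (ψ ∈ Γ ∧ Formula.neg χ ∈ Γ)
  | .know _ ψ => ψ ∈ Γ
  | .neg (.know _ ψ) => Formula.neg ψ ∈ Γ ∨ ψ ∈ Γ
  | .kh i ψ => Formula.neg (Formula.know i ψ) ∈ Γ ∨ Formula.know i ψ ∈ Γ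
  | .neg (.kh i ψ) => Formula.neg (Formula.know i ψ) ∈ Γ
  | _ => True

/-- All formulas of `Γ` are checked; nodes with such labels are the ``and''
nodes (expanded by step (2)), the remaining expanded nodes are ``or'' nodes. -/
def Saturated (Γ : Set (Formula P I)) : Prop := ∀ φ ∈ Γ, AutoChecked Γ φ

/-- The labels of the children created when one of the rules (a)-(g) processes
the formula `φ` at a node labeled `Γ`. -/
def orOut (Γ : Set (Formula P I)) : Formula P I → Set (Set (Formula P I))
  | .neg (.neg ψ) => {insert ψ Γ}
  | .and ψ χ => {insert ψ (insert χ Γ)}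
  | .neg (.and ψ χ) =>
      {insert (Formula.neg ψ) (insert (Formula.neg χ) Γ),
       insert (Formula.neg ψ) (insert χ Γ),
       insert ψ (insert (Formula.neg χ) Γ)}
  | .know _ ψ => {insert ψ Γ}
  | .neg (.know _ ψ) => {insert (Formula.neg ψ) Γ, insert ψ Γ}
  | .kh i ψ =>
      {insert (Formula.neg (Formula.know i ψ)) Γ, insert (Formula.know i ψ) Γ}
  | .neg (.kh i ψ) => {insert (Formula.neg (Formula.know i ψ)) Γ}
  | _ => ∅

/-- `Σ(n,¬Kᵢψ) = {¬ψ} ∪ Γ|Kᵢ ∪ Γ|¬Kᵢ ∪ Γ|Khᵢ ∪ Γ|¬Khᵢ` where `Γ = L(n)`. -/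
def SigmaSet (Γ : Set (Formula P I)) (i : I) (ψ : Formula P I) :
    Set (Formula P I) :=
  insert (Formula.neg ψ)
    {φ ∈ Γ | (∃ χ, φ = Formula.know i χ) ∨ (∃ χ, φ = Formula.neg (Formula.know i χ)) ∨
             (∃ χ, φ = Formula.kh i χ) ∨ (∃ χ, φ = Formula.neg (Formula.kh i χ))}

/-- Expansion condition for ``or'' nodes (step (1), rules (a)-(g)): some
unchecked formula of the label is processed and the children of the node are
exactly the prescribed `ε`-children. -/
def OrNodeCond (n : T.Node) : Prop :=
  ∃ φ ∈ T.label n, ¬ AutoChecked (T.label n) φ ∧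
    (∀ Δ ∈ orOut (T.label n) φ,
      ∃ m, T.parent m = some n ∧ T.elabel m = ELabel.eps ∧ T.label m = Δ ∧
        T.blockedBy m = none) ∧
    (∀ m, T.parent m = some n →
      T.elabel m = ELabel.eps ∧ T.label m ∈ orOut (T.label n) φ ∧
        T.blockedBy m = none)

/-- Expansion condition for ``and'' nodes (step (2), rules (i), (j), (k)): the
children of the node are exactly those prescribed by the three rules, and a
(k)-child is blocked iff some ancestor carries the same label. -/
def AndNodeCond (n : T.Node) : Prop :=
  (∀ i ψ, Formula.neg (Formula.know i ψ) ∈ T.label n →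
    ¬ (∃ n', IAnc T i n' n ∧ T.label n' = SigmaSet (T.label n) i ψ) →
    ∃ m, T.parent m = some n ∧ T.elabel m = ELabel.ag i ∧
      T.label m = SigmaSet (T.label n) i ψ ∧ T.blockedBy m = none) ∧
  (∀ i ψ, Formula.kh i ψ ∈ T.label n → Formula.neg (Formula.know i ψ) ∈ T.label n →
    ∃ m, T.parent m = some n ∧ T.elabel m = ELabel.act i ψ ∧
      T.label m = {Formula.know i ψ} ∧ T.blockedBy m = none) ∧
  (∀ i ψ χ, Formula.neg (Formula.kh i χ) ∈ T.label n →
    Formula.kh i ψ ∈ T.label n → Formula.neg (Formula.know i ψ) ∈ T.label n →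
    ∃ m, T.parent m = some n ∧ T.elabel m = ELabel.act i ψ ∧
      T.label m = {Formula.know i ψ, Formula.neg (Formula.kh i χ)} ∧
      ((∃ n', Ancestor T n' m ∧ T.label n' = T.label m) ↔ T.blockedBy m ≠ none)) ∧
  (∀ m, T.parent m = some n →
    (∃ i ψ, T.elabel m = ELabel.ag i ∧ Formula.neg (Formula.know i ψ) ∈ T.label n ∧
      T.label m = SigmaSet (T.label n) i ψ ∧
      ¬ (∃ n', IAnc T i n' n ∧ T.label n' = SigmaSet (T.label n) i ψ)) ∨
    (∃ i ψ, T.elabel m = ELabel.act i ψ ∧ Formula.kh i ψ ∈ T.label n ∧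
      Formula.neg (Formula.know i ψ) ∈ T.label n ∧
      T.label m = {Formula.know i ψ}) ∨
    (∃ i ψ χ, T.elabel m = ELabel.act i ψ ∧ Formula.neg (Formula.kh i χ) ∈ T.label n ∧
      Formula.kh i ψ ∈ T.label n ∧ Formula.neg (Formula.know i ψ) ∈ T.label n ∧
      T.label m = {Formula.know i ψ, Formula.neg (Formula.kh i χ)}))

/-- `T` is a tableau for `φ₀`: the root is labeled `{φ₀}`, blocked nodes are
blocked by an ancestor with the same label, blocked nodes and blatantly
inconsistent nodes are leaves, and every other node is expanded according to
step (1) (``or'' nodes) or step (2) (``and'' nodes) of the construction. -/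
structure IsTableau (φ0 : Formula P I) (T : LTree P I) : Prop where
  root_label : T.label T.root = {φ0}
  blocked_spec : ∀ n n', T.blockedBy n = some n' →
    Ancestor T n' n ∧ T.label n' = T.label n
  blocked_leaf : ∀ n, T.blockedBy n ≠ none → IsLeaf T n
  blatant_leaf : ∀ n, Blatant (T.label n) → IsLeaf T n
  or_node : ∀ n, ¬ Blatant (T.label n) → T.blockedBy n = none →
    ¬ Saturated (T.label n) → OrNodeCond T n
  and_node : ∀ n, ¬ Blatant (T.label n) → T.blockedBy n = none →
    Saturated (T.label n) → AndNodeCond T n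

/-! ### Subtrees -/

/-- A subtree: a set of nodes containing the root and closed under parents. -/
def IsSubtree (S : Set T.Node) : Prop :=
  T.root ∈ S ∧ ∀ n ∈ S, ∀ m, T.parent n = some m → m ∈ S

/-- A complete subtree: it contains the root, all children of each of its
``and'' non-leaf nodes, and at least one child of each of its ``or'' non-leaf
nodes. -/
def CompleteSubtree (S : Set T.Node) : Prop :=
  IsSubtree T S ∧
  (∀ n ∈ S, ¬ IsLeaf T n → Saturated (T.label n) → ∀ m ∈ Children T n, m ∈ S) ∧
  (∀ n ∈ S, ¬ IsLeaf T n → ¬ Saturated (T.label n) → ∃ m ∈ Children T n, m ∈ S)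

/-- A subtree is closed iff some of its nodes has a blatantly inconsistent
label; otherwise it is open. -/
def ClosedSubtree (S : Set T.Node) : Prop := ∃ n ∈ S, Blatant (T.label n)

/-- A tableau is closed iff all its complete subtrees are closed. -/
def TableauClosed : Prop := ∀ S : Set T.Node, CompleteSubtree T S → ClosedSubtree T S

/-! ### Maximal ε-paths and the induced model -/

/-- An `ε`-edge from `m` down to `n` inside the node set `S`. -/
def EpsStep (S : Set T.Node) (m n : T.Node) : Prop :=
  m ∈ S ∧ n ∈ S ∧ T.parent n = some m ∧ T.elabel n = ELabel.eps

/-- `n` is an `ε`-descendant of `m` inside `S` (reflexive-transitive). -/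
def EpsDesc (S : Set T.Node) : T.Node → T.Node → Prop :=
  Relation.ReflTransGen (EpsStep T S)

/-- A maximal `ε`-path of the subtree with node set `S`, recorded by its
initial node `top` and its end node `bot`.  Its label is `T.label bot`. -/
structure MaxEpsPath (T : LTree P I) (S : Set T.Node) where
  top : T.Node
  bot : T.Node
  top_mem : top ∈ S
  bot_mem : bot ∈ S
  desc : EpsDesc T S top bot
  top_max : ∀ m, ¬ EpsStep T S m top
  bot_max : ∀ m, ¬ EpsStep T S bot m

/-- The states of the induced model: non-blocked maximal `ε`-paths. -/
def PathW (T : LTree P I) (S : Set T.Node) : Type :=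
  {ρ : MaxEpsPath T S // T.blockedBy ρ.bot = none}

/-- `ρ₂` is an `i`-child path of `ρ₁`: `ρ₁ρ₂` is a path whose connecting edge
is labeled `i`. -/
def ISimStep (S : Set T.Node) (i : I) (ρ1 ρ2 : PathW T S) : Prop :=
  T.parent ρ2.1.top = some ρ1.1.bot ∧ T.elabel ρ2.1.top = ELabel.ag i

/-- The node `n'` lies on the maximal `ε`-path `ρ`. -/
def OnPath (S : Set T.Node) (ρ : MaxEpsPath T S) (n' : T.Node) : Prop :=
  EpsDesc T S ρ.top n' ∧ EpsDesc T S n' ρ.bot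

/-- The model `M^T` induced by the (complete) subtree with node set `S`:
states are the non-blocked maximal `ε`-paths, `∼ᵢ` is the least equivalence
relation containing the `i`-edge steps, actions of agent `i` are the actions
`a_{Khᵢψ}` labeling edges of the subtree, `(ρ, ρ') ∈ R_a` iff there is an
`a`-edge from the end of `ρ` to the start of a maximal `ε`-path `ρ''` where
`ρ'' = ρ'` or `ρ''` is blocked by a node lying on `ρ'`, and `ρ ∈ V(p)` iff
`p ∈ L(ρ)`. -/
def inducedModel (T : LTree P I) (S : Set T.Node) : Model P I where
  W := PathW T S
  sim := fun i => Relation.EqvGen (ISimStep T S i)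
  equiv := fun _ => Relation.EqvGen.is_equivalence _
  Act := fun i => {ψ : Formula P I // ∃ m n, m ∈ S ∧ n ∈ S ∧
    T.parent m = some n ∧ T.elabel m = ELabel.act i ψ}
  R := fun i a ρ1 ρ2 => ∃ ρ'' : MaxEpsPath T S,
    T.parent ρ''.top = some ρ1.1.bot ∧ T.elabel ρ''.top = ELabel.act i a.1 ∧
    (ρ'' = ρ2.1 ∨ ∃ n', T.blockedBy ρ''.bot = some n' ∧ OnPath T S ρ2.1 n')
  V := fun ρ p => Formula.atom p ∈ T.label ρ.1.bot

/-- `L(ρ)|Kᵢ`: the `Kᵢ`-formulas of `Γ`. -/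
def projK (i : I) (Γ : Set (Formula P I)) : Set (Formula P I) :=
  {φ ∈ Γ | ∃ ψ, φ = Formula.know i ψ}

/-- `L(ρ)|¬Kᵢ`: the `¬Kᵢ`-formulas of `Γ`. -/
def projNK (i : I) (Γ : Set (Formula P I)) : Set (Formula P I) :=
  {φ ∈ Γ | ∃ ψ, φ = Formula.neg (Formula.know i ψ)}

/-- `L(ρ)|Khᵢ`: the `Khᵢ`-formulas of `Γ`. -/
def projKh (i : I) (Γ : Set (Formula P I)) : Set (Formula P I) :=
  {φ ∈ Γ | ∃ ψ, φ = Formula.kh i ψ}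

/-- `L(ρ)|¬Khᵢ`: the `¬Khᵢ`-formulas of `Γ`. -/
def projNKh (i : I) (Γ : Set (Formula P I)) : Set (Formula P I) :=
  {φ ∈ Γ | ∃ ψ, φ = Formula.neg (Formula.kh i ψ)}

/-- `ForcesWithin M i X α s`: agent `i` can force the play from `[s]ⁱ` into a class contained
in `X`, with the ordinal `α` bounding the length of the play. -/
inductive ForcesWithin (M : Model P I) (i : I) (X : M.W → Prop) : Ordinal.{0} → M.W → Prop
  | stay {α s} : (∀ t, M.sim i s t → X t) → ForcesWithin M i X α s
  | move {α s} (a : M.Act i) (rank : M.W → Ordinal.{0}) :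
      (∀ t, M.sim i s t → ∃ u, M.R i a t u) →
      (∀ t, M.ctrans i a s t → rank t < α) →
      (∀ t, M.ctrans i a s t → ForcesWithin M i X (rank t) t) → ForcesWithin M i X α s

/-- Agent `i` can force the play from `[s]ⁱ` into a class contained in `X`. -/
def Forces (M : Model P I) (i : I) (X : M.W → Prop) (s : M.W) : Prop :=
  ∃ α, ForcesWithin M i X α s

section Forces

variable {M : Model P I} {i : I} {X : M.W → Prop}

theorem Model.sim_iff_of_sim {s s' : M.W} (h : M.sim i s s') (t : M.W) :
    M.sim i s t ↔ M.sim i s' t :=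
  ⟨(M.equiv i).trans ((M.equiv i).symm h), (M.equiv i).trans h⟩

theorem Model.ctrans_iff_of_sim_left {s s' : M.W} (h : M.sim i s s') (a : M.Act i) (t : M.W) :
    M.ctrans i a s t ↔ M.ctrans i a s' t := by
  simp only [Model.ctrans, Model.sim_iff_of_sim h]

theorem Model.ctrans_iff_of_sim_right {t t' : M.W} (h : M.sim i t t') (a : M.Act i) (s : M.W) :
    M.ctrans i a s t ↔ M.ctrans i a s t' := by
  simp only [Model.ctrans, Model.sim_iff_of_sim h]

theorem ForcesWithin.of_sim {α : Ordinal} {s s' : M.W} (h : M.sim i s s')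
    (hs : ForcesWithin M i X α s) : ForcesWithin M i X α s' := by
  cases hs with
  | stay hX => exact .stay fun t ht => hX t ((Model.sim_iff_of_sim h t).2 ht)
  | move a rank hexec hlt hnext =>
    exact .move a rank (fun t ht => hexec t ((Model.sim_iff_of_sim h t).2 ht))
      (fun t ht => hlt t ((Model.ctrans_iff_of_sim_left h a t).2 ht))
      (fun t ht => hnext t ((Model.ctrans_iff_of_sim_left h a t).2 ht))

theorem Forces.stay {s : M.W} (h : ∀ t, M.sim i s t → X t) : Forces M i X s :=
  ⟨0, .stay h⟩

theorem Forces.move {s : M.W} (a : M.Act i) (hexec : ∀ t, M.sim i s t → ∃ u, M.R i a t u)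
    (hnext : ∀ t, M.ctrans i a s t → Forces M i X t) : Forces M i X s := by
  choose! rank hrank using hnext
  exact ⟨⨆ t, Order.succ (rank t), .move a rank hexec
    (fun t _ => (Order.lt_succ (rank t)).trans_le
      (Ordinal.le_iSup (fun t => Order.succ (rank t)) t)) hrank⟩

theorem Forces.of_forces {s : M.W} (h : Forces M i (Forces M i X) s) : Forces M i X s := by
  obtain ⟨α, h⟩ := h
  induction h with
  | stay hX => exact hX _ ((M.equiv i).refl _)
  | move a rank hexec _ _ ih => exact .move a hexec ih

/-- The least ordinal within which `i` can force `X` from `[s]ⁱ`. -/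
noncomputable def forceRank (M : Model P I) (i : I) (X : M.W → Prop) (s : M.W) : Ordinal.{0} :=
  sInf {α | ForcesWithin M i X α s}

theorem forceRank_eq_of_sim {s s' : M.W} (h : M.sim i s s') :
    forceRank M i X s = forceRank M i X s' :=
  congrArg sInf (Set.ext fun _ => ⟨.of_sim h, .of_sim ((M.equiv i).symm h)⟩)

/-- `a` is executable throughout `[s]ⁱ` and leads only to classes from which `X` can be forced
with a smaller rank. -/
def Progress (M : Model P I) (i : I) (X : M.W → Prop) (s : M.W) (a : M.Act i) : Prop :=
  (∀ t, M.sim i s t → ∃ u, M.R i a t u) ∧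
    ∀ t, M.ctrans i a s t → Forces M i X t ∧ forceRank M i X t < forceRank M i X s

theorem progress_eq_of_sim {s s' : M.W} (h : M.sim i s s') :
    Progress M i X s = Progress M i X s' := by
  funext a
  simp only [Progress, Model.sim_iff_of_sim h, Model.ctrans_iff_of_sim_left h,
    forceRank_eq_of_sim h]

theorem Forces.stay_or_progress {s : M.W} (h : Forces M i X s) :
    (∀ t, M.sim i s t → X t) ∨ ∃ a, Progress M i X s a := by
  have hs : ForcesWithin M i X (forceRank M i X s) s := csInf_mem h
  generalize hα : forceRank M i X s = α at hs
  cases hs with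
  | stay hX => exact .inl hX
  | move a rank hexec hlt hnext =>
    refine .inr ⟨a, hexec, fun t ht => ⟨⟨_, hnext t ht⟩, hα ▸ ?_⟩⟩
    exact (csInf_le' (s := {β | ForcesWithin M i X β t}) (hnext t ht)).trans_lt (hlt t ht)

open Classical in
/-- The strategy that makes progress towards `X` whenever possible. -/
noncomputable def progressStrategy (M : Model P I) (i : I) (X : M.W → Prop) : Strategy M i where
  act s := if h : ∃ a, Progress M i X s a then some h.choose else none
  congr s t h := by simp only [progress_eq_of_sim h]
  exec s a h := by
    split at h
    next hs => exact (Option.some.inj h) ▸ hs.choose_spec.1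
    next => cases h

theorem progress_of_progressStrategy_act_eq_some {s : M.W} {a : M.Act i}
    (h : (progressStrategy M i X).act s = some a) : Progress M i X s a := by
  simp only [progressStrategy] at h
  split at h
  next hs => exact (Option.some.inj h) ▸ hs.choose_spec
  next => cases h

theorem not_progress_of_progressStrategy_act_eq_none {s : M.W}
    (h : (progressStrategy M i X).act s = none) : ¬ ∃ a, Progress M i X s a := by
  simpa [progressStrategy] using h

theorem Strategy.FinExec.forces {δ : ℕ → M.W} {h : ℕ}
    (hδ : (progressStrategy M i X).FinExec δ h) (h0 : Forces M i X (δ 0)) :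
    Forces M i X (δ h) := by
  cases h with
  | zero => exact h0
  | succ k =>
    obtain ⟨a, ha, hstep⟩ := hδ k k.lt_succ_self
    exact ((progress_of_progressStrategy_act_eq_some ha).2 _ hstep).1

theorem not_infExec_progressStrategy (δ : ℕ → M.W) :
    ¬ (progressStrategy M i X).InfExec δ := by
  intro hδ
  obtain ⟨k, hk⟩ := WellFounded.not_rel_apply_succ (r := (· < ·))
    fun k => forceRank M i X (δ k)
  obtain ⟨a, ha, hstep⟩ := hδ k
  exact hk ((progress_of_progressStrategy_act_eq_some ha).2 _ hstep).2

/-- Prepending a `σ`-step to a complete finite execution of `σ`. -/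
theorem Strategy.CompleteFinExec.cons {σ : Strategy M i} {δ : ℕ → M.W} {h : ℕ} {s : M.W}
    {a : M.Act i} (hδ : σ.CompleteFinExec δ h) (ha : σ.act s = some a)
    (hstep : M.ctrans i a s (δ 0)) :
    σ.CompleteFinExec (fun k => Nat.casesOn k s δ) (h + 1) := by
  refine ⟨fun k hk => ?_, hδ.2⟩
  cases k with
  | zero => exact ⟨a, ha, hstep⟩
  | succ k => exact hδ.1 k (Nat.lt_of_succ_lt_succ hk)

theorem Strategy.forces_of_acc (σ : Strategy M i) {s : M.W}
    (hacc : Acc (fun t s => ∃ a, σ.act s = some a ∧ M.ctrans i a s t) s)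
    (hend : ∀ (δ : ℕ → M.W) (h : ℕ), M.sim i s (δ 0) → σ.CompleteFinExec δ h →
      ∀ t, M.sim i (δ h) t → X t) :
    Forces M i X s := by
  induction hacc with
  | intro s _ ih =>
    cases ha : σ.act s with
    | none =>
      exact .stay (hend (fun _ => s) 0 ((M.equiv i).refl s)
        ⟨fun k hk => absurd hk k.not_lt_zero, ha⟩)
    | some a =>
      refine .move a (σ.exec s a ha) fun t ht => ih t ⟨a, ha, ht⟩ fun δ h h0 hδ => ?_
      exact hend _ (h + 1) ((M.equiv i).refl s)
        (hδ.cons ha ((Model.ctrans_iff_of_sim_right h0 a s).1 ht))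

theorem sat_kh_iff_forces {s : M.W} {φ : Formula P I} :
    Sat M s (.kh i φ) ↔ Forces M i (fun t => Sat M t φ) s := by
  rw [Sat]
  constructor
  · rintro ⟨σ, hinf, hend⟩
    refine σ.forces_of_acc ?_ hend
    by_contra hacc
    obtain ⟨δ, rfl, hδ⟩ := not_acc_iff_exists_descending_chain.1 hacc
    exact hinf δ ((M.equiv i).refl _) hδ
  · rintro ⟨α, hs⟩
    refine ⟨progressStrategy M i fun t => Sat M t φ, fun δ _ => not_infExec_progressStrategy δ,
      fun δ h h0 hδ => ?_⟩
    exact (hδ.1.forces ⟨α, hs.of_sim h0⟩).stay_or_progress.resolve_right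
      (not_progress_of_progressStrategy_act_eq_none hδ.2)

end Forces

/-- the formula `Kh_i Kh_i φ → Kh_i φ` is valid. -/
theorem kh_kh_imp_kh {P I : Type} (hI : ∃ i j : I, i ≠ j)
    (M : Model P I) (s : M.W) (i : I) (φ : Formula P I)
    (h : Sat M s (Formula.kh i (Formula.kh i φ))) :
    Sat M s (Formula.kh i φ) := by
  rw [sat_kh_iff_forces] at h ⊢
  simp only [sat_kh_iff_forces] at h
  exact h.of_forces

end ELKh
end

section
/- For every model M, state s, agent i, and formulas ψ, χ of ELKh_n: if M,s ⊨ Kh_i ψ and M,s ⊨ ¬Kh_i χ, and σ is any strategy for agent i witnessing Kh_i ψ at s (i.e. all complete executions of σ starting from [s]^i are finite and every state in every class in ECE(σ,[s]^i) satisfies ψ), then there exists a state t such that [t]^i ∈ ECE(σ,[s]^i) and M,t ⊨ ¬Kh_i χ. -/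
/-!
Formalization of the logic of strategically knowing how (ELKh_n) and of the
tableau procedure for it.
-/

namespace ELKh

variable {P I : Type}

variable (T : LTree P I)

namespace Strategy

variable {M : Model P I} {i : I}

/-- All complete executions of `τ` from `[x]ⁱ` are finite and end in classes all of whose
states satisfy `Q`. -/
def Wins (Q : M.W → Prop) (τ : Strategy M i) (x : M.W) : Prop :=
  (∀ δ : ℕ → M.W, M.sim i x (δ 0) → ¬ τ.InfExec δ) ∧
  (∀ (δ : ℕ → M.W) (h : ℕ), M.sim i x (δ 0) → τ.CompleteFinExec δ h →
    ∀ t, M.sim i (δ h) t → Q t)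

variable {Q : M.W → Prop}

theorem Wins.of_sim {τ : Strategy M i} {x y : M.W} (hx : τ.Wins Q x) (hxy : M.sim i x y) :
    τ.Wins Q y :=
  ⟨fun δ h0 => hx.1 δ ((M.equiv i).trans hxy h0),
    fun δ h h0 => hx.2 δ h ((M.equiv i).trans hxy h0)⟩

theorem setOf_wins_eq_of_sim {x y : M.W} (hxy : M.sim i x y) :
    {τ : Strategy M i | τ.Wins Q x} = {τ | τ.Wins Q y} :=
  Set.ext fun _ => ⟨fun h => h.of_sim hxy, fun h => h.of_sim ((M.equiv i).symm hxy)⟩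

/-- Winning strategies remain winning after each of their steps. -/
theorem Wins.step {τ : Strategy M i} {x y : M.W} {a : M.Act i} (hx : τ.Wins Q x)
    (ha : τ.act x = some a) (hxy : M.ctrans i a x y) : τ.Wins Q y := by
  have first : ∀ δ : ℕ → M.W, M.sim i y (δ 0) → M.ctrans i a x (δ 0) := by
    obtain ⟨x', y', hx', hy', hR⟩ := hxy
    exact fun δ h0 => ⟨x', y', hx', (M.equiv i).trans ((M.equiv i).symm h0) hy', hR⟩
  let prepend (δ : ℕ → M.W) : ℕ → M.W := fun n => Nat.casesOn n x δ
  refine ⟨fun δ h0 hinf => hx.1 (prepend δ) ((M.equiv i).refl x) ?_,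
    fun δ h h0 hc => hx.2 (prepend δ) (h + 1) ((M.equiv i).refl x) ⟨?_, hc.2⟩⟩
  · rintro (_ | k)
    · exact ⟨a, ha, first δ h0⟩
    · exact hinf k
  · rintro (_ | k) hk
    · exact ⟨a, ha, first δ h0⟩
    · exact hc.1 k (by omega)

theorem Wins.of_act_eq_none {τ : Strategy M i} {x : M.W} (hx : τ.Wins Q x)
    (ha : τ.act x = none) : Q x :=
  hx.2 (fun _ => x) 0 ((M.equiv i).refl x) ⟨fun _ hk => absurd hk (Nat.not_lt_zero _), ha⟩ x
    ((M.equiv i).refl x)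

section LeastWinning

variable [LinearOrder (Strategy M i)] [WellFoundedLT (Strategy M i)]

open Classical in
/-- The least strategy that wins from `[x]ⁱ`, or `σ` if there is none. -/
noncomputable def leastWinning (Q : M.W → Prop) (σ : Strategy M i) (x : M.W) : Strategy M i :=
  if h : {τ : Strategy M i | τ.Wins Q x}.Nonempty then wellFounded_lt.min _ h else σ

theorem leastWinning_congr (σ : Strategy M i) {x y : M.W} (hxy : M.sim i x y) :
    σ.leastWinning Q x = σ.leastWinning Q y := by
  rw [leastWinning, leastWinning, setOf_wins_eq_of_sim hxy]

theorem wins_leastWinning (σ : Strategy M i) {x : M.W} (hx : ∃ τ : Strategy M i, τ.Wins Q x) :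
    (σ.leastWinning Q x).Wins Q x := by
  have hx' : {τ : Strategy M i | τ.Wins Q x}.Nonempty := hx
  rw [leastWinning, dif_pos hx']
  exact wellFounded_lt.min_mem _ hx'

theorem leastWinning_le (σ : Strategy M i) {x : M.W} {τ : Strategy M i} (hτ : τ.Wins Q x) :
    σ.leastWinning Q x ≤ τ := by
  have hx' : {τ : Strategy M i | τ.Wins Q x}.Nonempty := ⟨τ, hτ⟩
  rw [leastWinning, dif_pos hx']
  exact not_lt.1 (wellFounded_lt.not_lt_min {τ : Strategy M i | τ.Wins Q x} hτ)

theorem leastWinning_of_not_exists (σ : Strategy M i) {x : M.W}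
    (hx : ¬ ∃ τ : Strategy M i, τ.Wins Q x) : σ.leastWinning Q x = σ :=
  dif_neg hx

/-- The strategy that plays, at each class, the least strategy winning from that class, and
plays `σ` where no strategy wins. -/
noncomputable def glue (Q : M.W → Prop) (σ : Strategy M i) : Strategy M i where
  act x := (σ.leastWinning Q x).act x
  congr x y hxy := by
    rw [leastWinning_congr σ hxy]
    exact (σ.leastWinning Q y).congr x y hxy
  exec x a ha := (σ.leastWinning Q x).exec x a ha

theorem wins_leastWinning_of_steps (σ : Strategy M i) {δ : ℕ → M.W} {k : ℕ}
    (hk : ∃ τ : Strategy M i, τ.Wins Q (δ k)) (hs : (σ.glue Q).Steps δ k) :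
    (σ.leastWinning Q (δ k)).Wins Q (δ (k + 1)) := by
  obtain ⟨a, ha, ht⟩ := hs
  exact (wins_leastWinning σ hk).step ha ht

/-- The glued strategy has no infinite execution from a class where some strategy wins: along
such an execution the least winning strategy descends, hence stabilizes. -/
theorem not_infExec_glue (σ : Strategy M i) {δ : ℕ → M.W}
    (h0 : ∃ τ : Strategy M i, τ.Wins Q (δ 0)) : ¬ (σ.glue Q).InfExec δ := by
  intro hinf
  have hw : ∀ k, ∃ τ : Strategy M i, τ.Wins Q (δ k) := fun k => by
    induction k with
    | zero => exact h0
    | succ k ih => exact ⟨_, wins_leastWinning_of_steps σ ih (hinf k)⟩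
  have hanti : Antitone fun k => σ.leastWinning Q (δ k) :=
    antitone_nat_of_succ_le fun k =>
      leastWinning_le σ (wins_leastWinning_of_steps σ (hw k) (hinf k))
  obtain ⟨_, ⟨n, rfl⟩, hn⟩ := wellFounded_lt.has_min
    (Set.range fun k => σ.leastWinning Q (δ k)) (Set.range_nonempty _)
  have hstable : ∀ k, σ.leastWinning Q (δ (n + k)) = σ.leastWinning Q (δ n) := fun k =>
    le_antisymm (hanti (Nat.le_add_right n k)) (not_lt.1 (hn _ ⟨n + k, rfl⟩))
  refine (wins_leastWinning σ (hw n)).1 (fun k => δ (n + k)) ((M.equiv i).refl _) fun k => ?_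
  obtain ⟨a, ha, ht⟩ := hinf (n + k)
  exact ⟨a, hstable k ▸ ha, ht⟩

end LeastWinning

/-- If all executions of `σ` from `[s]ⁱ` are finite and end in classes from which some strategy
wins, then some strategy wins from `[s]ⁱ`. -/
theorem Wins.exists_wins {σ : Strategy M i} {s : M.W}
    (hσ : σ.Wins (fun t => ∃ τ : Strategy M i, τ.Wins Q t) s) :
    ∃ τ : Strategy M i, τ.Wins Q s := by
  obtain ⟨_, _⟩ := exists_wellFoundedLT (Strategy M i)
  have steps_of_not : ∀ {δ : ℕ → M.W} {k : ℕ}, (¬ ∃ τ : Strategy M i, τ.Wins Q (δ k)) →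
      (σ.glue Q).Steps δ k → σ.Steps δ k := by
    rintro δ k hk ⟨a, ha, ht⟩
    exact ⟨a, leastWinning_of_not_exists σ hk ▸ ha, ht⟩
  refine ⟨σ.glue Q, fun δ h0 hinf => ?_, fun δ h h0 hc t ht => ?_⟩
  · refine hσ.1 δ h0 fun k => steps_of_not (fun hk => ?_) (hinf k)
    exact not_infExec_glue σ (δ := fun n => δ (k + n)) hk fun n => hinf (k + n)
  · have hend : ∃ τ : Strategy M i, τ.Wins Q (δ h) := by
      by_contra hno
      have hbefore : ∀ k < h, ¬ ∃ τ : Strategy M i, τ.Wins Q (δ k) := by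
        intro k hk hwin
        refine hno (Nat.le_induction (P := fun m _ => m ≤ h → ∃ τ : Strategy M i, τ.Wins Q (δ m))
          (fun _ => hwin) (fun m _ ih hm => ?_) h hk.le le_rfl)
        exact ⟨_, wins_leastWinning_of_steps σ (ih (by omega)) (hc.1 m hm)⟩
      have hnone : σ.act (δ h) = none := leastWinning_of_not_exists σ hno ▸ hc.2
      exact hno (hσ.2 δ h h0 ⟨fun k hk => steps_of_not (hbefore k hk) (hc.1 k hk), hnone⟩ (δ h)
        ((M.equiv i).refl _))
    refine ((wins_leastWinning σ hend).of_sim ht).of_act_eq_none ?_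
    rw [← (σ.leastWinning Q (δ h)).congr _ _ ht]
    exact hc.2

end Strategy

/-- if `M,s ⊨ Kh_i ψ` and `M,s ⊨ ¬Kh_i χ`, and σ is any strategy
for agent `i` witnessing `Kh_i ψ` at `s` (all complete executions of σ from
`[s]ⁱ` are finite and every state in every end class of a complete execution
from `[s]ⁱ` satisfies ψ), then some state `t` with `[t]ⁱ ∈ ECE(σ,[s]ⁱ)`
satisfies `¬Kh_i χ`. -/
theorem witness_has_not_kh_end {P I : Type} (hI : ∃ i j : I, i ≠ j)
    (M : Model P I) (s : M.W) (i : I) (ψ χ : Formula P I)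
    (h1 : Sat M s (Formula.kh i ψ))
    (h2 : Sat M s (Formula.neg (Formula.kh i χ)))
    (σ : Strategy M i)
    (hfin : ∀ δ : ℕ → M.W, M.sim i s (δ 0) → ¬ σ.InfExec δ)
    (hgood : ∀ (δ : ℕ → M.W) (h : ℕ), M.sim i s (δ 0) → σ.CompleteFinExec δ h →
      ∀ t, M.sim i (δ h) t → Sat M t ψ) :
    ∃ t : M.W,
      (∃ (δ : ℕ → M.W) (h : ℕ), M.sim i s (δ 0) ∧ σ.CompleteFinExec δ h ∧
        M.sim i (δ h) t) ∧
      Sat M t (Formula.neg (Formula.kh i χ)) := by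
  by_contra! hno
  simp only [Sat, not_not] at hno h2
  exact h2 (Strategy.Wins.exists_wins (σ := σ)
    ⟨hfin, fun δ h h0 hc t ht => hno t ⟨δ, h, h0, hc, ht⟩⟩)

end ELKh
end

section
/- Let T be a complete subtree of the tableau T_{φ0}, σ an i-strategy in the induced model M^T, and δ = [ρ1]^i ⋯ [ρh]^i a possible execution of σ in M^T. If ¬Kh_i χ ∈ L(ρh) and δ is not complete, then there exists ρ ∈ W(M^T) such that δ[ρ]^i is a possible execution of σ and ¬Kh_i χ ∈ L(ρ). -/
/-!
Formalization of the logic of strategically knowing how (ELKh_n) and of the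
tableau procedure for it.
-/

namespace ELKh

variable {P I : Type}

variable (T : LTree P I)

/-! ### Subformula closure -/

theorem mem_subf_self (φ : Formula P I) : φ ∈ subf φ := by
  cases φ <;> simp [subf]

theorem subf_subset_of_mem {φ ψ : Formula P I} (hψ : ψ ∈ subf φ) : subf ψ ⊆ subf φ := by
  induction φ with
  | bot => rw [subf, Set.mem_singleton_iff] at hψ; rw [hψ]
  | atom p => rw [subf, Set.mem_singleton_iff] at hψ; rw [hψ]
  | and φ₁ φ₂ ih₁ ih₂ =>
    rcases hψ with rfl | hψ | hψ
    · rfl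
    · exact fun x hx => Or.inr (Or.inl (ih₁ hψ hx))
    · exact fun x hx => Or.inr (Or.inr (ih₂ hψ hx))
  | neg φ ih | know i φ ih | kh i φ ih =>
    rcases hψ with rfl | hψ
    · rfl
    · exact fun x hx => Or.inr (ih hψ hx)

theorem finite_subf (φ : Formula P I) : (subf φ).Finite := by
  induction φ with
  | bot => exact Set.finite_singleton _
  | atom p => exact Set.finite_singleton _
  | neg φ ih | know i φ ih | kh i φ ih => exact ih.insert _
  | and φ ψ ih₁ ih₂ => exact (ih₁.union ih₂).insert _

theorem finite_subPlus (φ0 : Formula P I) : (subPlus φ0).Finite := by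
  have hfin := finite_subf φ0
  let unKh : Formula P I → Formula P I
    | .kh i ψ => .know i ψ
    | φ => φ
  refine Set.Finite.subset
    (((hfin.union (hfin.image Formula.neg)).union (hfin.image unKh)).union
      (hfin.image fun φ => Formula.neg (unKh φ))) ?_
  rintro χ (⟨ψ, hψ, rfl | rfl⟩ | ⟨i, ψ, hψ, rfl | rfl⟩)
  · exact Or.inl (Or.inl (Or.inl hψ))
  · exact Or.inl (Or.inl (Or.inr ⟨ψ, hψ, rfl⟩))
  · exact Or.inl (Or.inr ⟨_, hψ, rfl⟩)
  · exact Or.inr ⟨_, hψ, rfl⟩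

theorem mem_subf_of_neg {φ0 ψ : Formula P I} (hψ : Formula.neg ψ ∈ subf φ0) : ψ ∈ subf φ0 :=
  subf_subset_of_mem hψ (Or.inr (mem_subf_self ψ))

theorem mem_subf_of_know {φ0 ψ : Formula P I} {i : I} (hψ : Formula.know i ψ ∈ subf φ0) :
    ψ ∈ subf φ0 :=
  subf_subset_of_mem hψ (Or.inr (mem_subf_self ψ))

theorem mem_subf_of_kh {φ0 ψ : Formula P I} {i : I} (hψ : Formula.kh i ψ ∈ subf φ0) :
    ψ ∈ subf φ0 :=
  subf_subset_of_mem hψ (Or.inr (mem_subf_self ψ))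

theorem mem_subf_of_and {φ0 ψ χ : Formula P I} (h : Formula.and ψ χ ∈ subf φ0) :
    ψ ∈ subf φ0 ∧ χ ∈ subf φ0 :=
  ⟨subf_subset_of_mem h (Or.inr (Or.inl (mem_subf_self ψ))),
    subf_subset_of_mem h (Or.inr (Or.inr (mem_subf_self χ)))⟩

theorem mem_subPlus_of_mem_subf {φ0 ψ : Formula P I} (hψ : ψ ∈ subf φ0) : ψ ∈ subPlus φ0 :=
  Or.inl ⟨ψ, hψ, Or.inl rfl⟩

theorem neg_mem_subPlus_of_mem_subf {φ0 ψ : Formula P I} (hψ : ψ ∈ subf φ0) :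
    Formula.neg ψ ∈ subPlus φ0 :=
  Or.inl ⟨ψ, hψ, Or.inr rfl⟩

/-- A non-knowledge formula whose negation lies in `sub⁺(φ₀)` is a subformula of `φ₀`. -/
theorem mem_subf_of_neg_mem_subPlus {φ0 ψ : Formula P I} (hψ : Formula.neg ψ ∈ subPlus φ0)
    (hk : ∀ i χ, ψ ≠ Formula.know i χ) : ψ ∈ subf φ0 := by
  rcases hψ with ⟨χ, hχ, h | h⟩ | ⟨i, χ, -, h | h⟩
  · exact mem_subf_of_neg (h ▸ hχ)
  · cases h; exact hχ
  · cases h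
  · cases h; exact absurd rfl (hk _ _)

/-- A formula in `sub⁺(φ₀)` that is neither a negation nor a knowledge formula is a
subformula of `φ₀`. -/
theorem mem_subf_of_mem_subPlus {φ0 ψ : Formula P I} (hψ : ψ ∈ subPlus φ0)
    (hn : ∀ χ, ψ ≠ Formula.neg χ) (hk : ∀ i χ, ψ ≠ Formula.know i χ) : ψ ∈ subf φ0 := by
  rcases hψ with ⟨χ, hχ, rfl | rfl⟩ | ⟨i, χ, -, rfl | rfl⟩
  · exact hχ
  · exact absurd rfl (hn _)
  · exact absurd rfl (hk _ _)
  · exact absurd rfl (hn _)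

theorem mem_subf_of_know_mem_subPlus {φ0 ψ : Formula P I} {i : I}
    (hψ : Formula.know i ψ ∈ subPlus φ0) : ψ ∈ subf φ0 := by
  rcases hψ with ⟨χ, hχ, h | h⟩ | ⟨j, χ, hχ, h | h⟩
  · exact mem_subf_of_know (h ▸ hχ)
  · cases h
  · cases h; exact mem_subf_of_kh hχ
  · cases h

theorem mem_subf_of_neg_know_mem_subPlus {φ0 ψ : Formula P I} {i : I}
    (hψ : Formula.neg (Formula.know i ψ) ∈ subPlus φ0) : ψ ∈ subf φ0 := by
  rcases hψ with ⟨χ, hχ, h | h⟩ | ⟨j, χ, hχ, h | h⟩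
  · exact mem_subf_of_know (mem_subf_of_neg (h ▸ hχ))
  · cases h; exact mem_subf_of_know hχ
  · cases h
  · cases h; exact mem_subf_of_kh hχ

/-- `sub⁺(φ₀)` is closed under the expansion rules for or-nodes. -/
theorem orOut_subset_subPlus {φ0 φ : Formula P I} {Γ Δ : Set (Formula P I)}
    (hφ : φ ∈ subPlus φ0) (hΓ : Γ ⊆ subPlus φ0) (hΔ : Δ ∈ orOut Γ φ) : Δ ⊆ subPlus φ0 := by
  have hpos := @mem_subPlus_of_mem_subf P I φ0
  have hneg := @neg_mem_subPlus_of_mem_subf P I φ0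
  unfold orOut at hΔ
  split at hΔ
  · have hψ := mem_subf_of_neg (mem_subf_of_neg_mem_subPlus hφ (by simp))
    rw [Set.mem_singleton_iff.1 hΔ]
    exact Set.insert_subset (hpos hψ) hΓ
  · obtain ⟨h₁, h₂⟩ := mem_subf_of_and (mem_subf_of_mem_subPlus hφ (by simp) (by simp))
    rw [Set.mem_singleton_iff.1 hΔ]
    exact Set.insert_subset (hpos h₁) (Set.insert_subset (hpos h₂) hΓ)
  · obtain ⟨h₁, h₂⟩ := mem_subf_of_and (mem_subf_of_neg_mem_subPlus hφ (by simp))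
    rcases hΔ with rfl | rfl | rfl
    · exact Set.insert_subset (hneg h₁) (Set.insert_subset (hneg h₂) hΓ)
    · exact Set.insert_subset (hneg h₁) (Set.insert_subset (hpos h₂) hΓ)
    · exact Set.insert_subset (hpos h₁) (Set.insert_subset (hneg h₂) hΓ)
  · rw [Set.mem_singleton_iff.1 hΔ]
    exact Set.insert_subset (hpos (mem_subf_of_know_mem_subPlus hφ)) hΓ
  · have hψ := mem_subf_of_neg_know_mem_subPlus hφ
    rcases hΔ with rfl | rfl
    · exact Set.insert_subset (hneg hψ) hΓ
    · exact Set.insert_subset (hpos hψ) hΓ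
  · have hψ := mem_subf_of_mem_subPlus hφ (by simp) (by simp)
    rcases hΔ with rfl | rfl
    · exact Set.insert_subset (Or.inr ⟨_, _, hψ, Or.inr rfl⟩) hΓ
    · exact Set.insert_subset (Or.inr ⟨_, _, hψ, Or.inl rfl⟩) hΓ
  · have hψ := mem_subf_of_neg_mem_subPlus hφ (by simp)
    rw [Set.mem_singleton_iff.1 hΔ]
    exact Set.insert_subset (Or.inr ⟨_, _, hψ, Or.inr rfl⟩) hΓ
  · exact hΔ.elim

/-- Processing an unchecked formula strictly enlarges the label. -/
theorem ssubset_of_mem_orOut {φ : Formula P I} {Γ Δ : Set (Formula P I)}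
    (hφ : ¬ AutoChecked Γ φ) (hΔ : Δ ∈ orOut Γ φ) : Γ ⊂ Δ := by
  have hsub : Γ ⊆ Δ := by
    unfold orOut at hΔ
    split at hΔ <;> simp only [Set.mem_insert_iff, Set.mem_singleton_iff,
      Set.mem_empty_iff_false] at hΔ <;> rcases hΔ with rfl | rfl | rfl <;>
      intro x hx <;> simp [hx]
  refine hsub.ssubset_of_ne ?_
  rintro rfl
  apply hφ
  unfold orOut at hΔ
  split at hΔ <;> simp only [Set.mem_insert_iff, Set.mem_singleton_iff,
      Set.mem_empty_iff_false] at hΔ <;> simp only [AutoChecked] <;> grind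

/-! ### ε-paths in complete subtrees -/

section Paths

variable {T : LTree P I} {φ0 : Formula P I} {S : Set T.Node}

/-- The parent of an `ε`-child is an or-node, expanded by one of the rules (a)-(g). -/
theorem IsTableau.exists_orOut_of_eps (hT : IsTableau φ0 T) {n m : T.Node}
    (hp : T.parent m = some n) (he : T.elabel m = ELabel.eps) :
    T.blockedBy m = none ∧
      ∃ φ ∈ T.label n, ¬ AutoChecked (T.label n) φ ∧ T.label m ∈ orOut (T.label n) φ := by
  have hleaf : ¬ IsLeaf T n := fun hl => hl m hp
  have hbl : ¬ Blatant (T.label n) := fun hb => hleaf (hT.blatant_leaf n hb)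
  have hnb : T.blockedBy n = none := by
    by_contra hb; exact hleaf (hT.blocked_leaf n hb)
  by_cases hs : Saturated (T.label n)
  · rcases (hT.and_node n hbl hnb hs).2.2.2 m hp with
      ⟨_, _, h, -⟩ | ⟨_, _, h, -⟩ | ⟨_, _, _, h, -⟩ <;> rw [he] at h <;> cases h
  · obtain ⟨φ, hφ, hc, -, hch⟩ := hT.or_node n hbl hnb hs
    exact ⟨(hch m hp).2.2, φ, hφ, hc, (hch m hp).2.1⟩

/-- The parent of an action-child `a_{Khᵢψ}` is a non-blocked, consistent and-node
containing `Khᵢψ` and `¬Kᵢψ`. -/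
theorem IsTableau.andNode_of_act (hT : IsTableau φ0 T) {n m : T.Node} {i : I}
    {ψ : Formula P I} (hp : T.parent m = some n) (he : T.elabel m = ELabel.act i ψ) :
    Saturated (T.label n) ∧ AndNodeCond T n ∧ Formula.kh i ψ ∈ T.label n ∧
      Formula.neg (Formula.know i ψ) ∈ T.label n := by
  have hleaf : ¬ IsLeaf T n := fun hl => hl m hp
  have hbl : ¬ Blatant (T.label n) := fun hb => hleaf (hT.blatant_leaf n hb)
  have hnb : T.blockedBy n = none := by
    by_contra hb; exact hleaf (hT.blocked_leaf n hb)
  by_cases hs : Saturated (T.label n)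
  · have hand := hT.and_node n hbl hnb hs
    refine ⟨hs, hand, ?_⟩
    rcases hand.2.2.2 m hp with
      ⟨_, _, h, -⟩ | ⟨_, _, h, h₁, h₂, -⟩ | ⟨_, _, _, h, -, h₁, h₂, -⟩ <;>
      rw [he] at h <;> cases h
    · exact ⟨h₁, h₂⟩
    · exact ⟨h₁, h₂⟩
  · obtain ⟨φ, -, -, -, hch⟩ := hT.or_node n hbl hnb hs
    have h := (hch m hp).1
    rw [he] at h; cases h

/-- Below every non-blocked node with label in some `sub⁺(θ)` there is a maximal
`ε`-descendant inside the subtree; it is not blocked and its label is larger. -/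
theorem IsTableau.exists_eps_bot (hT : IsTableau φ0 T) (θ : Formula P I) {n : T.Node}
    (hn : n ∈ S) (hb : T.blockedBy n = none) (hl : T.label n ⊆ subPlus θ) :
    ∃ b ∈ S, EpsDesc T S n b ∧ (∀ m, ¬ EpsStep T S b m) ∧ T.blockedBy b = none ∧
      T.label n ⊆ T.label b := by
  induction hk : (subPlus θ \ T.label n).ncard using Nat.strong_induction_on generalizing n with
  | _ k ih =>
    by_cases hmax : ∀ m, ¬ EpsStep T S n m
    · exact ⟨n, hn, Relation.ReflTransGen.refl, hmax, hb, subset_rfl⟩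
    · push Not at hmax
      obtain ⟨m, hstep⟩ := hmax
      obtain ⟨hmb, φ, hφ, hc, hout⟩ := hT.exists_orOut_of_eps hstep.2.2.1 hstep.2.2.2
      have hlt := ssubset_of_mem_orOut hc hout
      have hml := orOut_subset_subPlus (hl hφ) hl hout
      have hcard : (subPlus θ \ T.label m).ncard < k := by
        rw [← hk]
        refine Set.ncard_lt_ncard ?_ ((finite_subPlus θ).sdiff)
        obtain ⟨x, hx, hx'⟩ := Set.exists_of_ssubset hlt
        exact Set.ssubset_iff_of_subset (Set.sdiff_subset_sdiff_right hlt.subset) |>.2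
          ⟨x, ⟨hml hx, hx'⟩, fun h => h.2 hx⟩
      obtain ⟨b, hbS, hd, hbm, hbb, hsub⟩ := ih _ hcard hstep.2.1 hmb hml rfl
      exact ⟨b, hbS, Relation.ReflTransGen.head hstep hd, hbm, hbb, hlt.subset.trans hsub⟩

theorem exists_eps_top {n : T.Node} (hn : n ∈ S) :
    ∃ t ∈ S, EpsDesc T S t n ∧ ∀ m, ¬ EpsStep T S m t := by
  induction hk : T.depth n using Nat.strong_induction_on generalizing n with
  | _ k ih =>
    by_cases hmax : ∀ m, ¬ EpsStep T S m n
    · exact ⟨n, hn, Relation.ReflTransGen.refl, hmax⟩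
    · push Not at hmax
      obtain ⟨m, hstep⟩ := hmax
      have hlt : T.depth m < k := by
        have := T.depth_parent n m hstep.2.2.1; omega
      obtain ⟨t, htS, hd, ht⟩ := ih _ hlt hstep.1 rfl
      exact ⟨t, htS, Relation.ReflTransGen.tail hd hstep, ht⟩

/-- Every non-blocked node of the subtree with label in some `sub⁺(θ)` lies on a state
of the induced model with larger label. -/
theorem IsTableau.exists_path_through (hT : IsTableau φ0 T) (θ : Formula P I) {n : T.Node}
    (hn : n ∈ S) (hb : T.blockedBy n = none) (hl : T.label n ⊆ subPlus θ) :
    ∃ ρ : PathW T S, OnPath T S ρ.1 n ∧ T.label n ⊆ T.label ρ.1.bot := by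
  obtain ⟨b, hbS, hnb, hbm, hbb, hsub⟩ := hT.exists_eps_bot θ hn hb hl
  obtain ⟨t, htS, htn, htm⟩ := exists_eps_top hn
  exact ⟨⟨⟨t, b, htS, hbS, htn.trans hnb, htm, hbm⟩, hbb⟩, ⟨htn, hnb⟩, hsub⟩

theorem OnPath.eq_top {ρ : MaxEpsPath T S} {n : T.Node} (h : OnPath T S ρ n)
    (hn : T.elabel n ≠ ELabel.eps) : ρ.top = n := by
  rcases Relation.ReflTransGen.cases_tail h.1 with h' | ⟨m, -, hstep⟩
  · exact h'.symm
  · exact absurd hstep.2.2.2 hn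

theorem IsSubtree.mem_of_ancestor (hS : IsSubtree T S) {m n : T.Node}
    (h : Ancestor T m n) (hn : n ∈ S) : m ∈ S := by
  induction h using Relation.TransGen.head_induction_on with
  | single h => exact hS.2 _ hn _ h
  | head h _ ih => exact hS.2 _ ih _ h

theorem Ancestor.not_isLeaf {m n : T.Node} (h : Ancestor T m n) : ¬ IsLeaf T m := by
  obtain ⟨k, hk, -⟩ := Relation.TransGen.head'_iff.1 h
  exact fun hl => hl k hk

end Paths

/-- if `¬Kh_i χ ∈ L(δ h)` for the end of a non-complete possible
execution `[δ 0]⋯[δ h]` of an `i`-strategy σ in the induced model, then the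
execution can be extended by one σ-step to a state `ρ` with `¬Kh_i χ ∈ L(ρ)`. -/
theorem negKh_inherited_along_executions {P I : Type} (hI : ∃ i j : I, i ≠ j)
    (φ0 : Formula P I) (T : LTree P I) (hT : IsTableau φ0 T)
    (S : Set T.Node) (hcomp : CompleteSubtree T S)
    (i : I) (χ : Formula P I)
    (σ : Strategy (inducedModel T S) i)
    (δ : ℕ → (inducedModel T S).W) (h : ℕ)
    (hexec : σ.FinExec δ h)
    (hkh : Formula.neg (Formula.kh i χ) ∈ T.label (δ h).1.bot)
    (hnotcomplete : σ.act (δ h) ≠ none) :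
    ∃ ρ : (inducedModel T S).W,
      (∃ a, σ.act (δ h) = some a ∧ (inducedModel T S).ctrans i a (δ h) ρ) ∧
      Formula.neg (Formula.kh i χ) ∈ T.label ρ.1.bot := by
  obtain ⟨a, ha⟩ := Option.ne_none_iff_exists'.1 hnotcomplete
  obtain ⟨_, ρ₀, hpar₀, hlab₀, -⟩ :=
    σ.exec _ _ ha (δ h) (((inducedModel T S).equiv i).refl _)
  obtain ⟨hsat, hand, hkhψ, hnk⟩ := hT.andNode_of_act hpar₀ hlab₀
  obtain ⟨m, hm, hml, hmlab, -⟩ := hand.2.2.1 i a.1 χ hkh hkhψ hnk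
  have hmS : m ∈ S :=
    hcomp.2.1 _ (δ h).1.bot_mem (fun hl => hl _ hpar₀) hsat m hm
  have hmeps : T.elabel m ≠ ELabel.eps := by rw [hml]; simp
  have hχm : Formula.neg (Formula.kh i χ) ∈ T.label m := by rw [hmlab]; simp
  have hmsub : T.label m ⊆
      subPlus (Formula.and (Formula.know i a.1) (Formula.neg (Formula.kh i χ))) := by
    have hθ := mem_subf_of_and
      (mem_subf_self (Formula.and (Formula.know i a.1) (Formula.neg (Formula.kh i χ))))
    rw [hmlab]
    exact Set.pair_subset (mem_subPlus_of_mem_subf hθ.1) (mem_subPlus_of_mem_subf hθ.2)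
  suffices hR : ∃ ρ : PathW T S, (inducedModel T S).R i a (δ h) ρ ∧
      T.label m ⊆ T.label ρ.1.bot by
    obtain ⟨ρ, hR, hsub⟩ := hR
    exact ⟨ρ, ⟨a, ha, δ h, ρ, ((inducedModel T S).equiv i).refl _,
      ((inducedModel T S).equiv i).refl _, hR⟩, hsub hχm⟩
  rcases hb : T.blockedBy m with _ | n'
  · obtain ⟨ρ, hon, hsub⟩ := hT.exists_path_through _ hmS hb hmsub
    have htop := hon.eq_top hmeps
    exact ⟨ρ, ⟨ρ.1, htop ▸ hm, htop ▸ hml, Or.inl rfl⟩, hsub⟩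
  · obtain ⟨hanc, hlab⟩ := hT.blocked_spec m n' hb
    have hn'b : T.blockedBy n' = none := by
      by_contra hne; exact hanc.not_isLeaf (hT.blocked_leaf n' hne)
    obtain ⟨ρ, hon, hsub⟩ := hT.exists_path_through _
      (hcomp.1.mem_of_ancestor hanc hmS) hn'b (hlab ▸ hmsub)
    have hmleaf : IsLeaf T m := hT.blocked_leaf m (by simp [hb])
    exact ⟨ρ, ⟨⟨m, m, hmS, hmS, Relation.ReflTransGen.refl, fun _ hs => hmeps hs.2.2.2,
      fun k hs => hmleaf k hs.2.2.1⟩, hm, hml, Or.inr ⟨n', hb, hon⟩⟩, hlab ▸ hsub⟩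

end ELKh
end
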